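/- For every u ∈ Im 𝕆 and every orthonormal basis f₀, f₁, …, f₇ of 𝕆 one has Σ_{i=0}^{7} ( (u·f_i)·\overline{f_i} − f_i·\overline{(u·f_i)} ) = 16·u. -/

import Mathlib

open scoped InnerProductSpace

/-!
In a composition algebra `(x * y) * conj y = ‖y‖² x` and `y * conj (x * y) = ‖y‖² conj x`, so each
term of the sum is `‖fᵢ‖² (u - conj u)`, whatever the family `f`. Both identities are obtained by
pairing with an arbitrary `z`: polarizing `‖x * y‖ = ‖x‖ ‖y‖` in both variables gives an exchange
law, whose specialization to the unit says that right multiplication by `conj y` is the adjoint of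
right multiplication by `y`.
-/

section UnitConj

variable {E : Type*} [NormedAddCommGroup E] [InnerProductSpace ℝ E]

/-- The conjugation `x ↦ 2⟪x, e⟫ e - x` of a composition algebra with unit `e`. It depends only on
the inner product and on `e`, so the multiplication is not a parameter. -/
def unitConj (e x : E) : E := (2 * ⟪x, e⟫_ℝ) • e - x

theorem inner_unitConj_left (e x z : E) :
    ⟪unitConj e x, z⟫_ℝ = 2 * ⟪x, e⟫_ℝ * ⟪e, z⟫_ℝ - ⟪x, z⟫_ℝ := by
  rw [unitConj, inner_sub_left, real_inner_smul_left]

theorem sub_unitConj_of_inner_eq_zero {e x : E} (hx : ⟪x, e⟫_ℝ = 0) :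
    x - unitConj e x = (2 : ℝ) • x := by
  rw [unitConj, hx, mul_zero, zero_smul, zero_sub, sub_neg_eq_add, two_smul]

end UnitConj

section OrthogonalMultiplication

variable {E F G : Type*} [NormedAddCommGroup E] [InnerProductSpace ℝ E]
  [NormedAddCommGroup F] [InnerProductSpace ℝ F] [NormedAddCommGroup G] [InnerProductSpace ℝ G]

/-- An orthogonal multiplication: a bilinear map along which norms multiply. The three spaces may
differ, so that actions on a module are covered along with composition algebras. -/
def IsOrthogonalMultiplication (B : E →ₗ[ℝ] F →ₗ[ℝ] G) : Prop :=
  ∀ x y, ‖B x y‖ = ‖x‖ * ‖y‖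

namespace IsOrthogonalMultiplication

theorem inner_apply_apply_right {B : E →ₗ[ℝ] F →ₗ[ℝ] G} (hB : IsOrthogonalMultiplication B)
    (x z : E) (y : F) : ⟪B x y, B z y⟫_ℝ = ⟪x, z⟫_ℝ * ‖y‖ ^ 2 := by
  simp only [real_inner_eq_norm_add_mul_self_sub_norm_mul_self_sub_norm_mul_self_div_two,
    ← LinearMap.add_apply, ← map_add, hB _ _]
  ring

theorem inner_apply_apply_add_swap {B : E →ₗ[ℝ] F →ₗ[ℝ] G} (hB : IsOrthogonalMultiplication B)
    (x z : E) (y w : F) :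
    ⟪B x y, B z w⟫_ℝ + ⟪B x w, B z y⟫_ℝ = 2 * ⟪x, z⟫_ℝ * ⟪y, w⟫_ℝ := by
  have h := hB.inner_apply_apply_right x z (y + w)
  simp only [map_add, inner_add_left, inner_add_right, hB.inner_apply_apply_right,
    norm_add_sq_real] at h
  linarith

theorem inner_apply_unitConj {B : E →ₗ[ℝ] F →ₗ[ℝ] E} (hB : IsOrthogonalMultiplication B)
    {e : F} (unit_right : ∀ x, B x e = x) (x z : E) (y : F) :
    ⟪B x (unitConj e y), z⟫_ℝ = ⟪x, B z y⟫_ℝ := by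
  have exchange : ⟪B x y, z⟫_ℝ + ⟪x, B z y⟫_ℝ = 2 * ⟪x, z⟫_ℝ * ⟪y, e⟫_ℝ := by
    simpa only [unit_right] using hB.inner_apply_apply_add_swap x z y e
  rw [unitConj, map_sub, map_smul, unit_right, inner_sub_left, real_inner_smul_left]
  linarith

theorem apply_apply_unitConj {B : E →ₗ[ℝ] F →ₗ[ℝ] E} (hB : IsOrthogonalMultiplication B)
    {e : F} (unit_right : ∀ x, B x e = x) (x : E) (y : F) :
    B (B x y) (unitConj e y) = ‖y‖ ^ 2 • x := by
  refine ext_inner_right ℝ fun z => ?_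
  rw [hB.inner_apply_unitConj unit_right, hB.inner_apply_apply_right, real_inner_smul_left,
    mul_comm]

theorem apply_unitConj_apply {B : E →ₗ[ℝ] E →ₗ[ℝ] E} (hB : IsOrthogonalMultiplication B)
    {e : E} (unit_left : ∀ x, B e x = x) (unit_right : ∀ x, B x e = x) (x y : E) :
    B y (unitConj e (B x y)) = ‖y‖ ^ 2 • unitConj e x := by
  refine ext_inner_right ℝ fun z => ?_
  have exchange : ⟪y, B z (B x y)⟫_ℝ + ⟪B x y, B z y⟫_ℝ = 2 * ⟪e, z⟫_ℝ * ⟪y, B x y⟫_ℝ := by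
    simpa only [unit_left] using hB.inner_apply_apply_add_swap e z y (B x y)
  have inner_self_apply : ⟪y, B x y⟫_ℝ = ⟪x, e⟫_ℝ * ‖y‖ ^ 2 := by
    simpa only [unit_left, real_inner_comm e x] using hB.inner_apply_apply_right e x y
  calc ⟪B y (unitConj e (B x y)), z⟫_ℝ
      = ⟪y, B z (B x y)⟫_ℝ := hB.inner_apply_unitConj unit_right _ _ _
    _ = 2 * ⟪e, z⟫_ℝ * ⟪y, B x y⟫_ℝ - ⟪B x y, B z y⟫_ℝ := eq_sub_of_add_eq exchange
    _ = ‖y‖ ^ 2 * (2 * ⟪x, e⟫_ℝ * ⟪e, z⟫_ℝ - ⟪x, z⟫_ℝ) := by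
      rw [inner_self_apply, hB.inner_apply_apply_right]; ring
    _ = ⟪‖y‖ ^ 2 • unitConj e x, z⟫_ℝ := by rw [real_inner_smul_left, inner_unitConj_left]

end IsOrthogonalMultiplication

end OrthogonalMultiplication

theorem sum_pi_of_left_mul_general
    {O : Type*} [NormedAddCommGroup O] [InnerProductSpace ℝ O]
    {mul : O →ₗ[ℝ] O →ₗ[ℝ] O} (hmul : IsOrthogonalMultiplication mul) {e : O}
    (unit_left : ∀ x, mul e x = x) (unit_right : ∀ x, mul x e = x)
    (u : O) {ι : Type*} (s : Finset ι) (f : ι → O) :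
    ∑ i ∈ s, (mul (mul u (f i)) (unitConj e (f i)) - mul (f i) (unitConj e (mul u (f i))))
      = (∑ i ∈ s, ‖f i‖ ^ 2) • (u - unitConj e u) := by
  simp only [hmul.apply_apply_unitConj unit_right,
    hmul.apply_unitConj_apply unit_left unit_right, ← smul_sub, Finset.sum_smul]

/-- For every imaginary octonion `u` and every orthonormal basis
`f₀, …, f₇` of `𝕆` one has `Σ_i ((u·f_i)·conj(f_i) − f_i·conj(u·f_i)) = 16·u`. -/
theorem sum_pi_of_left_mul
    {O : Type*} [NormedAddCommGroup O] [InnerProductSpace ℝ O]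
    (hdim : Module.finrank ℝ O = 8)
    (mul : O →ₗ[ℝ] O →ₗ[ℝ] O) (e : O) (he : ‖e‖ = 1)
    (unit_left : ∀ x : O, mul e x = x) (unit_right : ∀ x : O, mul x e = x)
    (norm_mul : ∀ x y : O, ‖mul x y‖ = ‖x‖ * ‖y‖)
    (conj : O → O) (hconj : ∀ x : O, conj x = (2 * ⟪x, e⟫_ℝ) • e - x)
    (u : O) (hu : ⟪u, e⟫_ℝ = 0)
    (f : OrthonormalBasis (Fin 8) ℝ O) :
    ∑ i : Fin 8, (mul (mul u (f i)) (conj (f i)) - mul (f i) (conj (mul u (f i))))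
      = (16 : ℝ) • u := by
  obtain rfl : conj = unitConj e := funext hconj
  rw [sum_pi_of_left_mul_general norm_mul unit_left unit_right, sub_unitConj_of_inner_eq_zero hu,
    smul_smul]
  norm_num [f.norm_eq_one]
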